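/- Let G be a finite simple graph of order n ≥ 1 and let H be a connected graph of order m with minimum degree δ(H) ≥ 2. Then γ_MR(G ∘ H) ≤ (m − 4)·⌈n/2⌉ − m·⌊n/2⌋ + 2n. -/

import Mathlib

open Finset

namespace MRD

variable {V : Type*}

open scoped Classical

/-- Sum of `f` over the closed neighborhood of `v` in `G`:
`f(N[v]) = \sum_{u \in N[v]} f(u)`. -/
noncomputable def closedNbhdSum [Fintype V] (G : SimpleGraph V) (f : V → ℤ) (v : V) : ℤ :=
  ∑ u ∈ Finset.univ.filter (fun u => G.Adj v u ∨ u = v), f u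

/-- `f : V → {-1, 1, 2}` is a Majority Roman Dominating Function (MRDF) on `G`:
(i) `f(N[v]) ≥ 1` for at least half of the vertices, and (ii) every vertex with value `-1`
is adjacent to a vertex with value `2`. -/
noncomputable def IsMRDF [Fintype V] (G : SimpleGraph V) (f : V → ℤ) : Prop :=
  (∀ v, f v = -1 ∨ f v = 1 ∨ f v = 2) ∧
  Fintype.card V ≤ 2 * (Finset.univ.filter (fun v => 1 ≤ closedNbhdSum G f v)).card ∧
  (∀ u, f u = -1 → ∃ w, G.Adj u w ∧ f w = 2)

/-- The majority Roman domination number `γ_MR(G)`: the minimum weight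
`w(f) = ∑_v f(v)` over all MRDFs `f` on `G`. -/
noncomputable def mrdNum [Fintype V] (G : SimpleGraph V) : ℤ :=
  sInf {w : ℤ | ∃ f : V → ℤ, IsMRDF G f ∧ w = ∑ v, f v}

/-- The join `G ∨ H` of two simple graphs: disjoint union plus all edges between the parts. -/
def join {α β : Type*} (G : SimpleGraph α) (H : SimpleGraph β) : SimpleGraph (α ⊕ β) where
  Adj x y :=
    match x, y with
    | .inl a, .inl b => G.Adj a b
    | .inr a, .inr b => H.Adj a b
    | .inl _, .inr _ => True
    | .inr _, .inl _ => True
  symm := by constructor; rintro (a | a) (b | b) h <;> simp_all [SimpleGraph.adj_comm]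
  loopless := by constructor; rintro (a | a) h <;> simp_all

/-- The corona `G ∘ H` of two simple graphs: one copy of `G` and `|V(G)|` copies of `H`,
where the `v`-th vertex of `G` is joined to every vertex of the `v`-th copy of `H`. -/
def corona {α β : Type*} (G : SimpleGraph α) (H : SimpleGraph β) : SimpleGraph (α ⊕ α × β) where
  Adj x y :=
    match x, y with
    | .inl u, .inl v => G.Adj u v
    | .inr p, .inr q => p.1 = q.1 ∧ H.Adj p.2 q.2
    | .inl u, .inr p => u = p.1
    | .inr p, .inl u => u = p.1
  symm := by
    constructor
    rintro (u | ⟨u, x⟩) (v | ⟨v, y⟩) h <;> simp_all [SimpleGraph.adj_comm, eq_comm]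
  loopless := by constructor; rintro (u | ⟨u, x⟩) h <;> simp_all

/-- `S` is a dominating set of `G`. -/
def IsDomSet (G : SimpleGraph V) (S : Finset V) : Prop :=
  ∀ v, v ∉ S → ∃ u ∈ S, G.Adj v u

/-- The domination number `γ(G)`. -/
noncomputable def domNum [Fintype V] (G : SimpleGraph V) : ℕ :=
  sInf {k | ∃ S : Finset V, IsDomSet G S ∧ S.card = k}

/-- A set of vertices is independent if no two of its vertices are adjacent. -/
def IsIndepSet (G : SimpleGraph V) (S : Finset V) : Prop :=
  ∀ a ∈ S, ∀ b ∈ S, ¬ G.Adj a b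

/-- The independence number `β₀(G)`. -/
noncomputable def indepNum [Fintype V] (G : SimpleGraph V) : ℕ :=
  sSup {k | ∃ S : Finset V, IsIndepSet G S ∧ S.card = k}

/-- The cocktail party graph `K_{2n} - M` (complete graph minus a perfect matching),
realized on `Fin n × Fin 2`: `(i,a)` and `(j,b)` are adjacent iff `i ≠ j`. -/
def cocktail (n : ℕ) : SimpleGraph (Fin n × Fin 2) where
  Adj x y := x.1 ≠ y.1
  symm := ⟨fun _ _ h => h.symm⟩
  loopless := ⟨fun _ h => h rfl⟩

end MRD

/-!
Give every vertex of `G` the value `2`, so that every vertex of a copy of `H` is dominated. Choose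
a set `S` of `⌈n/2⌉` vertices of `G` and a set `T` of `t` vertices of `H`. Copies of `H` over `S`
receive `-1` on `T` and `1` elsewhere, all other copies receive `-1` throughout. The closed
neighborhood of a vertex in `S`, or in a copy over `S`, meets that copy in at least `δ(H) + 1`
vertices, at most `t` of them negative; with the `2` of the center its sum is at least
`δ(H) + 3 - 2t`, which is positive once `2t ≤ δ(H) + 2`. The vertices in question form at least
half of the corona. The theorem is the case `t = 2`.
-/

namespace MRD

section ClosedNbhdSum

variable {V : Type*} [Fintype V] (G : SimpleGraph V)

lemma closedNbhdSum_eq_sum_insert [DecidableEq V] (f : V → ℤ) (v : V)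
    [Fintype (G.neighborSet v)] :
    closedNbhdSum G f v = ∑ u ∈ insert v (G.neighborFinset v), f u := by
  unfold closedNbhdSum
  congr 1
  ext u
  simp [or_comm]

lemma apply_le_closedNbhdSum {f : V → ℤ} (hf : ∀ u, 0 ≤ f u) (v : V) :
    f v ≤ closedNbhdSum G f v :=
  single_le_sum (fun u _ => hf u) (by simp)

lemma mrdNum_le_sum {G : SimpleGraph V} {f : V → ℤ} (hf : IsMRDF G f) :
    mrdNum G ≤ ∑ v, f v := by
  refine csInf_le ⟨∑ _v : V, (-1 : ℤ), ?_⟩ ⟨f, hf, rfl⟩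
  rintro _ ⟨g, hg, rfl⟩
  refine sum_le_sum fun v _ => ?_
  rcases hg.1 v with h | h | h <;> lia

end ClosedNbhdSum

section SignSum

variable {V : Type*} [DecidableEq V]

lemma sum_ite_mem_neg_one_one (K T : Finset V) :
    ∑ v ∈ K, (if v ∈ T then (-1 : ℤ) else 1) = #K - 2 * #(K ∩ T) := by
  have hcard : #(K ∩ T) + #(K \ T) = #K := card_inter_add_card_sdiff K T
  rw [sum_ite, filter_mem_eq_inter, filter_notMem_eq_sdiff]
  simp only [sum_const, nsmul_eq_mul]
  lia

lemma card_sub_le_sum_ite_mem (K T : Finset V) :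
    (#K : ℤ) - 2 * #T ≤ ∑ v ∈ K, (if v ∈ T then (-1 : ℤ) else 1) := by
  have hcard : #(K ∩ T) ≤ #T := card_le_card inter_subset_right
  rw [sum_ite_mem_neg_one_one]
  lia

lemma degree_sub_le_closedNbhdSum_ite_mem [Fintype V] (G : SimpleGraph V) (T : Finset V) (v : V)
    [Fintype (G.neighborSet v)] :
    (G.degree v : ℤ) + 1 - 2 * #T ≤
      closedNbhdSum G (fun u => if u ∈ T then (-1 : ℤ) else 1) v := by
  have hcard : #(insert v (G.neighborFinset v)) = G.degree v + 1 := by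
    rw [card_insert_of_notMem (by simp), G.card_neighborFinset_eq_degree]
  have hsum := card_sub_le_sum_ite_mem (insert v (G.neighborFinset v)) T
  rw [closedNbhdSum_eq_sum_insert]
  lia

end SignSum

section Corona

variable {α β : Type*} (G : SimpleGraph α) (H : SimpleGraph β)

@[simp]
lemma corona_adj_inl_inl {a a' : α} : (corona G H).Adj (.inl a) (.inl a') ↔ G.Adj a a' :=
  Iff.rfl

@[simp]
lemma corona_adj_inl_inr {a : α} {p : α × β} : (corona G H).Adj (.inl a) (.inr p) ↔ a = p.1 :=
  Iff.rfl

@[simp]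
lemma corona_adj_inr_inl {p : α × β} {a : α} : (corona G H).Adj (.inr p) (.inl a) ↔ a = p.1 :=
  Iff.rfl

@[simp]
lemma corona_adj_inr_inr {p q : α × β} :
    (corona G H).Adj (.inr p) (.inr q) ↔ p.1 = q.1 ∧ H.Adj p.2 q.2 :=
  Iff.rfl

variable [Fintype α] [Fintype β]

lemma closedNbhdSum_corona_inl (f : α ⊕ α × β → ℤ) (a : α) :
    closedNbhdSum (corona G H) f (.inl a) =
      closedNbhdSum G (fun u => f (.inl u)) a + ∑ b, f (.inr (a, b)) := by
  classical
  simp_rw [closedNbhdSum, sum_filter]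
  rw [Fintype.sum_sum_type, Fintype.sum_prod_type]
  simp [eq_comm]

lemma closedNbhdSum_corona_inr (f : α ⊕ α × β → ℤ) (a : α) (b : β) :
    closedNbhdSum (corona G H) f (.inr (a, b)) =
      f (.inl a) + closedNbhdSum H (fun y => f (.inr (a, y))) b := by
  classical
  simp_rw [closedNbhdSum, sum_filter]
  rw [Fintype.sum_sum_type, Fintype.sum_prod_type]
  simp [eq_comm, ← and_or_left, ite_and]

end Corona

section CoronaWitness

variable {α β : Type*} [DecidableEq α] [DecidableEq β]

/-- The labelling of the corona that bounds `γ_MR` from above: vertices of `G` get `2`, copies of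
`H` over `S` get `-1` on `T` and `1` off `T`, and the remaining copies get `-1`. -/
def coronaWitness (S : Finset α) (T : Finset β) : α ⊕ α × β → ℤ
  | .inl _ => 2
  | .inr (a, b) => if a ∈ S then (if b ∈ T then -1 else 1) else -1

variable [Fintype α] [Fintype β] (G : SimpleGraph α) (H : SimpleGraph β)
  {S : Finset α} {T : Finset β}

lemma sum_coronaWitness (S : Finset α) (T : Finset β) :
    ∑ v, coronaWitness S T v =
      2 * Fintype.card α + #S * (Fintype.card β - 2 * #T : ℤ) - #Sᶜ * Fintype.card β := by
  have hcenters : ∑ a, coronaWitness S T (.inl a) = 2 * Fintype.card α := by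
    simp [coronaWitness, mul_comm]
  have hcopy (a : α) : ∑ b, coronaWitness S T (.inr (a, b)) =
      if a ∈ S then (Fintype.card β - 2 * #T : ℤ) else -Fintype.card β := by
    by_cases ha : a ∈ S <;> simp [coronaWitness, ha, sum_ite_mem_neg_one_one]
  simp_rw [Fintype.sum_sum_type, Fintype.sum_prod_type, hcenters, hcopy, sum_ite,
    filter_mem_eq_inter, filter_notMem_eq_sdiff, univ_inter, ← compl_eq_univ_sdiff, sum_const,
    nsmul_eq_mul]
  ring

lemma one_le_closedNbhdSum_coronaWitness_inl (hT : 2 * #T ≤ Fintype.card β + 1)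
    {a : α} (ha : a ∈ S) :
    1 ≤ closedNbhdSum (corona G H) (coronaWitness S T) (.inl a) := by
  have hcenters : 2 ≤ closedNbhdSum G (fun _ => 2) a :=
    apply_le_closedNbhdSum G (fun _ => zero_le_two) a
  have hcopy := card_sub_le_sum_ite_mem univ T
  rw [card_univ] at hcopy
  rw [closedNbhdSum_corona_inl]
  simp only [coronaWitness, if_pos ha]
  lia

lemma one_le_closedNbhdSum_coronaWitness_inr {b : β} [Fintype (H.neighborSet b)]
    (hT : 2 * #T ≤ H.degree b + 2) {a : α} (ha : a ∈ S) :
    1 ≤ closedNbhdSum (corona G H) (coronaWitness S T) (.inr (a, b)) := by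
  have hcopy := degree_sub_le_closedNbhdSum_ite_mem H T b
  rw [closedNbhdSum_corona_inr]
  simp only [coronaWitness, if_pos ha]
  lia

lemma isMRDF_coronaWitness [Nonempty β] [DecidableRel H.Adj]
    (hS : Fintype.card α ≤ 2 * #S) (hT : 2 * #T ≤ H.minDegree + 2) :
    IsMRDF (corona G H) (coronaWitness S T) := by
  refine ⟨?_, ?_, ?_⟩
  · rintro (a | ⟨a, b⟩) <;> simp only [coronaWitness] <;> grind
  · have hδ : H.minDegree < Fintype.card β := H.minDegree_lt_card
    have hgood : S.disjSum (S ×ˢ univ) ⊆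
        univ.filter fun v => 1 ≤ closedNbhdSum (corona G H) (coronaWitness S T) v := by
      rintro (a | ⟨a, b⟩) hv
      · rw [inl_mem_disjSum] at hv
        simpa using one_le_closedNbhdSum_coronaWitness_inl G H (by lia) hv
      · rw [inr_mem_disjSum, mem_product] at hv
        have hdeg := H.minDegree_le_degree b
        simpa using one_le_closedNbhdSum_coronaWitness_inr G H (by lia) hv.1
    calc Fintype.card (α ⊕ α × β) = Fintype.card α * (1 + Fintype.card β) := by
          rw [Fintype.card_sum, Fintype.card_prod]; ring
      _ ≤ 2 * #S * (1 + Fintype.card β) := Nat.mul_le_mul_right _ hS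
      _ = 2 * #(S.disjSum (S ×ˢ (univ : Finset β))) := by
          rw [card_disjSum, card_product, card_univ]; ring
      _ ≤ _ := Nat.mul_le_mul_left 2 (card_le_card hgood)
  · rintro (a | ⟨a, b⟩) h
    · simp [coronaWitness] at h
    · exact ⟨.inl a, rfl, rfl⟩

end CoronaWitness

end MRD

theorem mrdNum_corona_upper_general {α β : Type*} [Fintype α] [Fintype β] [Nonempty β]
    (G : SimpleGraph α) (H : SimpleGraph β) [DecidableRel H.Adj] {t : ℕ}
    (ht : 2 * t ≤ H.minDegree + 2) :
    MRD.mrdNum (MRD.corona G H) ≤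
      ((Fintype.card β : ℤ) - 2 * t) * ⌈(Fintype.card α : ℚ) / 2⌉
        - (Fintype.card β : ℤ) * ⌊(Fintype.card α : ℚ) / 2⌋ + 2 * Fintype.card α := by
  classical
  have hδ : H.minDegree < Fintype.card β := H.minDegree_lt_card
  obtain ⟨S, -, hS⟩ : ∃ S ⊆ (univ : Finset α), #S = (Fintype.card α + 1) / 2 :=
    exists_subset_card_eq (by rw [card_univ]; lia)
  obtain ⟨T, -, rfl⟩ : ∃ T ⊆ (univ : Finset β), #T = t :=
    exists_subset_card_eq (by rw [card_univ]; lia)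
  have hceil : ⌈(Fintype.card α : ℚ) / 2⌉ = #S := by
    have hdiv := Rat.ceil_natCast_div_natCast (Fintype.card α) 2
    push_cast at hdiv
    lia
  have hfloor : ⌊(Fintype.card α : ℚ) / 2⌋ = #Sᶜ := by
    have hdiv := Rat.floor_natCast_div_natCast (Fintype.card α) 2
    have hcompl := card_add_card_compl S
    push_cast at hdiv
    lia
  calc MRD.mrdNum (MRD.corona G H) ≤ ∑ v, MRD.coronaWitness S T v :=
        MRD.mrdNum_le_sum (MRD.isMRDF_coronaWitness G H (by lia) ht)
    _ = _ := by rw [MRD.sum_coronaWitness, hfloor, hceil]; ring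

/-- Let `G` have order `n ≥ 1` and let `H` be connected of order `m` with `δ(H) ≥ 2`.
Then `γ_MR(G ∘ H) ≤ (m - 4)·⌈n/2⌉ - m·⌊n/2⌋ + 2n`. -/
theorem mrdNum_corona_upper {α β : Type*} [Fintype α] [Fintype β]
    (G : SimpleGraph α) (H : SimpleGraph β) [DecidableRel H.Adj]
    (hn : 1 ≤ Fintype.card α) (hH : H.Connected) (hδ : 2 ≤ H.minDegree) :
    MRD.mrdNum (MRD.corona G H) ≤
      ((Fintype.card β : ℤ) - 4) * ⌈(Fintype.card α : ℚ) / 2⌉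
        - (Fintype.card β : ℤ) * ⌊(Fintype.card α : ℚ) / 2⌋ + 2 * Fintype.card α := by
  have := hH.nonempty
  simpa using mrdNum_corona_upper_general G H (t := 2) (by lia)
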